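/- For all 1 ≤ i ≠ j ≤ n: Y_i·D_j = (ℛ^{−1})^+_{ji}·D_j·Y_i·ℛ^+_{ij}. Moreover, for all 1 ≤ l ≤ n: Y_l·T^-_{l−1,1}·T^+_{1,l−1}·D_l = q^{−1}·D_l·(T^{−1})^+_{l,n−1}·(T^{−1})^-_{n−1,l}·Y_l. -/

import Mathlib

noncomputable section

/-- The Laurent polynomial ring `R[X₁^{±1}, …, Xₙ^{±1}]` in `n` variables over `R`,
realised as the monoid algebra of the additive monoid `Fin n →₀ ℤ` of exponent vectors. -/
abbrev Laur (R : Type*) [CommRing R] (n : ℕ) : Type _ :=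
  AddMonoidAlgebra R (Fin n →₀ ℤ)

variable {R : Type*} [CommRing R] {n : ℕ}

/-- The monomial `c · X^a`. -/
def mono (a : Fin n →₀ ℤ) (c : R) : Laur R n := AddMonoidAlgebra.single a c

/-- The generator `X_i`. -/
def Xel (i : Fin n) : Laur R n := mono (Finsupp.single i 1) 1

/-- The element `X_i⁻¹`. -/
def XinvEl (i : Fin n) : Laur R n := mono (Finsupp.single i (-1)) 1

/-- Multiplication by a Laurent polynomial, as a linear endomorphism. -/
def mulOp (x : Laur R n) : Module.End R (Laur R n) := LinearMap.mulLeft R x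

/-- The operator of multiplication by `X_i`, with `ℕ`-indexing (`0`-based; junk value `1`
out of range). -/
def XOp (i : ℕ) : Module.End R (Laur R n) :=
  if h : i < n then mulOp (Xel ⟨i, h⟩) else 1

/-- The operator of multiplication by `X_i⁻¹`, with `ℕ`-indexing. -/
def XinvOp (i : ℕ) : Module.End R (Laur R n) :=
  if h : i < n then mulOp (XinvEl ⟨i, h⟩) else 1

/-- Ascending product `f s * f (s+1) * ⋯ * f (s+len-1)` (equal to `1` when `len = 0`). -/
def aF {M : Type*} [Monoid M] (f : ℕ → M) (s len : ℕ) : M :=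
  ((List.range' s len).map f).prod

/-- Descending product `f (s+len-1) * ⋯ * f (s+1) * f s` (equal to `1` when `len = 0`). -/
def dF {M : Type*} [Monoid M] (f : ℕ → M) (s len : ℕ) : M :=
  (((List.range' s len).map f).reverse).prod

/-- Integer power `u^z`, where `v` is a designated (two-sided) inverse of `u`. -/
def zpowOp {M : Type*} [Monoid M] (u v : M) (z : ℤ) : M :=
  if 0 ≤ z then u ^ z.toNat else v ^ (-z).toNat

/-- The element `(ℛ^ε)^{±}_{ij}` of the paper: for `0`-based indices, when `j < i` this is
`f_{j+1}` descending-product, then `mid`, then `g_{j+1}` ascending-product; `1` for `i ≤ j`.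
Taking `f = T, g = Ti, mid = (T j)^2` gives `ℛ⁺`;  `f = T, g = Ti, mid = (Ti j)^2` gives `ℛ⁻`;
`f = Ti, g = T, mid = (T j)^2` gives `(ℛ⁻¹)⁺`;  `f = Ti, g = T, mid = (Ti j)^2` gives `(ℛ⁻¹)⁻`. -/
def Rgen {M : Type*} [Monoid M] (f g : ℕ → M) (mid : M) (i j : ℕ) : M :=
  if j < i then dF f (j + 1) (i - j - 1) * mid * aF g (j + 1) (i - j - 1) else 1

section Abstract

variable {M : Type*} [Monoid M]

lemma aF_zero (f : ℕ → M) (s : ℕ) : aF f s 0 = 1 := by simp [aF]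

lemma dF_zero (f : ℕ → M) (s : ℕ) : dF f s 0 = 1 := by simp [dF]

lemma aF_succ (f : ℕ → M) (s l : ℕ) : aF f s (l + 1) = f s * aF f (s + 1) l := by
  simp [aF, List.range'_succ]

lemma dF_succ (f : ℕ → M) (s l : ℕ) : dF f s (l + 1) = dF f (s + 1) l * f s := by
  simp [dF, List.range'_succ]

lemma aF_succ_right (f : ℕ → M) (s l : ℕ) : aF f s (l + 1) = aF f s l * f (s + l) := by
  simp [aF, List.range'_concat]

lemma dF_succ_left (f : ℕ → M) (s l : ℕ) : dF f s (l + 1) = f (s + l) * dF f s l := by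
  simp [dF, List.range'_concat]

/-- Invertible generators satisfying the braid relations. -/
structure BraidData (n : ℕ) (T Ti : ℕ → M) : Prop where
  inv1 : ∀ k, k + 1 < n → T k * Ti k = 1
  inv2 : ∀ k, k + 1 < n → Ti k * T k = 1
  far : ∀ k l, k + 1 < l → l + 1 < n → T k * T l = T l * T k
  braid : ∀ k, k + 2 < n → T k * T (k + 1) * T k = T (k + 1) * T k * T (k + 1)

lemma inv_swap {a a' b b' x : M} (ha : a' * a = 1) (hb : b * b' = 1) (h : a * x = x * b) :
    a' * x = x * b' := by
  calc a' * x = a' * x * (b * b') := by rw [hb, mul_one]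
    _ = a' * (x * b) * b' := by simp only [mul_assoc]
    _ = (a' * a) * x * b' := by rw [← h]; simp only [mul_assoc]
    _ = x * b' := by rw [ha, one_mul]

/-- A family with `B_j = T_j B_{j+1} T_j`, whose last member commutes with the early `T_k`. -/
structure Fam (n : ℕ) (T : ℕ → M) (B : ℕ → M) : Prop where
  step : ∀ j, j + 1 < n → B j = T j * B (j + 1) * T j
  last : ∀ k, k + 2 < n → T k * B (n - 1) = B (n - 1) * T k

variable {n : ℕ} {T Ti : ℕ → M}

lemma BraidData.comm (H : BraidData n T Ti) {k l : ℕ} (hk : k + 1 < n) (hl : l + 1 < n)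
    (h : k + 1 < l ∨ l + 1 < k) : T k * T l = T l * T k := by
  rcases h with h | h
  · exact H.far k l h hl
  · exact (H.far l k h hk).symm

lemma Fam.comm (H : BraidData n T Ti) {B : ℕ → M} (hB : Fam n T B) :
    ∀ d j k, j + d + 1 = n → k + 1 < n → k ≠ j → k + 1 ≠ j → T k * B j = B j * T k := by
  intro d
  induction d using Nat.strong_induction_on with
  | _ d ih =>
    intro j k hj hk h1 h2
    rcases d with _ | d
    · have : j = n - 1 := by omega
      subst this
      exact hB.last k (by omega)
    · have hs := hB.step j (by omega)
      by_cases hkj : k = j + 1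
      · subst hkj
        rcases d with _ | d
        · omega
        have hs2 := hB.step (j + 1) (by omega)
        have hc := ih d (by omega) (j + 2) j (by omega) (by omega) (by omega) (by omega)
        have hb := H.braid j (by omega)
        rw [hs, hs2]
        calc T (j + 1) * (T j * (T (j + 1) * B (j + 1 + 1) * T (j + 1)) * T j)
            = (T (j + 1) * T j * T (j + 1)) * B (j + 2) * T (j + 1) * T j := by
              simp only [mul_assoc]
          _ = T j * T (j + 1) * (T j * B (j + 2)) * T (j + 1) * T j := by
              rw [← hb]; simp only [mul_assoc]
          _ = T j * T (j + 1) * B (j + 2) * (T j * T (j + 1) * T j) := by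
              rw [hc]; simp only [mul_assoc]
          _ = _ := by rw [hb]; simp only [mul_assoc]
      · have hc := ih d (by omega) (j + 1) k (by omega) hk (by omega) (by omega)
        have hf := H.comm (k := k) (l := j) hk (by omega) (by omega)
        rw [hs]
        calc T k * (T j * B (j + 1) * T j) = (T k * T j) * B (j + 1) * T j := by
              simp only [mul_assoc]
          _ = T j * (T k * B (j + 1)) * T j := by rw [hf]; simp only [mul_assoc]
          _ = T j * B (j + 1) * (T k * T j) := by rw [hc]; simp only [mul_assoc]
          _ = _ := by rw [hf]; simp only [mul_assoc]

lemma Fam.comm' (H : BraidData n T Ti) {B : ℕ → M} (hB : Fam n T B) {j k : ℕ}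
    (hj : j < n) (hk : k + 1 < n) (h1 : k ≠ j) (h2 : k + 1 ≠ j) : T k * B j = B j * T k :=
  hB.comm H (n - 1 - j) j k (by omega) hk h1 h2

/-- Adjacent relation, spread from the last index to all. -/
lemma adjacent (H : BraidData n T Ti) {Y D : ℕ → M} (hY : Fam n T Y) (hD : Fam n T D)
    (hbase : ∀ m, m + 2 = n →
      Y (m + 1) * T m * D (m + 1) = T m * D (m + 1) * T m * Y (m + 1) * T m) :
    ∀ d i, i + d + 2 = n →
      Y (i + 1) * T i * D (i + 1) = T i * D (i + 1) * T i * Y (i + 1) * T i := by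
  intro d
  induction d with
  | zero => intro i hi; exact hbase i hi
  | succ d ih =>
    intro i hi
    have h := ih (i + 1) (by omega)
    have hb := H.braid i (by omega)
    have cY := hY.comm' H (j := i + 2) (k := i) (by omega) (by omega) (by omega) (by omega)
    have cD := hD.comm' H (j := i + 2) (k := i) (by omega) (by omega) (by omega) (by omega)
    rw [hY.step (i + 1) (by omega), hD.step (i + 1) (by omega)]
    simp only [show i + 1 + 1 = i + 2 from rfl] at *
    generalize T i = S at *
    generalize T (i + 1) = U at *
    generalize Y (i + 2) = y at *
    generalize D (i + 2) = d at *
    calc U * y * U * S * (U * d * U) = U * y * (U * S * U) * d * U := by simp only [mul_assoc]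
      _ = U * (y * S) * U * (S * d) * U := by rw [← hb]; simp only [mul_assoc]
      _ = U * S * (y * U * d) * S * U := by rw [← cY, cD]; simp only [mul_assoc]
      _ = (U * S * U) * d * U * y * (U * S * U) := by rw [h]; simp only [mul_assoc]
      _ = (S * U * S) * d * U * y * (S * U * S) := by rw [hb]
      _ = S * U * (S * d) * U * (y * S) * U * S := by simp only [mul_assoc]
      _ = S * U * d * (S * U * S) * y * U * S := by rw [cD, ← cY]; simp only [mul_assoc]
      _ = S * (U * d * U) * S * (U * y * U) * S := by rw [hb]; simp only [mul_assoc]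

lemma part_lt (H : BraidData n T Ti) {Y D : ℕ → M} (hY : Fam n T Y) (hD : Fam n T D)
    (hadj : ∀ i, i + 1 < n →
      Y (i + 1) * T i * D (i + 1) = T i * D (i + 1) * T i * Y (i + 1) * T i) (i : ℕ) :
    ∀ d, i + d + 1 < n → Y i * D (i + d + 1) =
      dF Ti (i + 1) d * T i ^ 2 * aF T (i + 1) d * D (i + d + 1) * Y i := by
  intro d
  induction d with
  | zero =>
    intro h
    have ha := hadj i h
    rw [dF_zero, aF_zero, hY.step i h, add_zero]
    simp only [mul_assoc, pow_two, one_mul] at ha ⊢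
    rw [ha]
  | succ d ih =>
    intro h
    have h0 := ih (by omega)
    have hs := hD.step (i + d + 1) (by omega)
    have i1 := H.inv1 (i + d + 1) (by omega)
    have i2 := H.inv2 (i + d + 1) (by omega)
    have c := hY.comm' H (j := i) (k := i + d + 1) (by omega) (by omega) (by omega) (by omega)
    have c' := inv_swap i2 i1 c
    have hs' : D (i + d + 2) = Ti (i + d + 1) * D (i + d + 1) * Ti (i + d + 1) := by
      rw [hs]
      calc _ = 1 * D (i + d + 2) * 1 := by simp
        _ = _ := by rw [← i2]; nth_rw 2 [i2]; rw [← i1]; simp only [mul_assoc]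
    rw [dF_succ_left, aF_succ_right]
    rw [show i + 1 + d = i + d + 1 by omega, show i + (d + 1) + 1 = i + d + 2 by omega]
    generalize dF Ti (i + 1) d = A at *
    generalize aF T (i + 1) d = B at *
    generalize T (i + d + 1) = t at *
    generalize Ti (i + d + 1) = t' at *
    calc Y i * D (i + d + 2) = (Y i * t') * D (i + d + 1) * t' := by
          rw [hs']; simp only [mul_assoc]
      _ = t' * (Y i * D (i + d + 1)) * t' := by rw [← c']; simp only [mul_assoc]
      _ = t' * (A * T i ^ 2 * B) * D (i + d + 1) * (Y i * t') := by rw [h0]; simp only [mul_assoc]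
      _ = t' * (A * T i ^ 2 * B) * (1 * D (i + d + 1) * t') * Y i := by
          rw [← c']; simp only [mul_assoc, one_mul]
      _ = t' * (A * T i ^ 2 * B) * (t * D (i + d + 2)) * Y i := by
          rw [← i1, hs']; simp only [mul_assoc]
      _ = _ := by simp only [mul_assoc]

lemma part_gt (H : BraidData n T Ti) {Y D : ℕ → M} (hY : Fam n T Y) (hD : Fam n T D)
    (hadj : ∀ i, i + 1 < n →
      Y (i + 1) * T i * D (i + 1) = T i * D (i + 1) * T i * Y (i + 1) * T i) (j : ℕ) :
    ∀ d, j + d + 1 < n → Y (j + d + 1) * D j =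
      D j * Y (j + d + 1) * (dF T (j + 1) d * T j ^ 2 * aF Ti (j + 1) d) := by
  intro d
  induction d with
  | zero =>
    intro h
    have ha := hadj j h
    rw [dF_zero, aF_zero, hD.step j h, add_zero]
    simp only [← mul_assoc, pow_two, one_mul, mul_one] at ha ⊢
    rw [ha]
  | succ d ih =>
    intro h
    have h0 := ih (by omega)
    have hs := hY.step (j + d + 1) (by omega)
    have i1 := H.inv1 (j + d + 1) (by omega)
    have i2 := H.inv2 (j + d + 1) (by omega)
    have c := hD.comm' H (j := j) (k := j + d + 1) (by omega) (by omega) (by omega) (by omega)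
    have c' := inv_swap i2 i1 c
    have hs' : Y (j + d + 2) = Ti (j + d + 1) * Y (j + d + 1) * Ti (j + d + 1) := by
      rw [hs]
      calc _ = 1 * Y (j + d + 2) * 1 := by simp
        _ = _ := by rw [← i2]; nth_rw 2 [i2]; rw [← i1]; simp only [mul_assoc]
    rw [dF_succ_left, aF_succ_right]
    rw [show j + 1 + d = j + d + 1 by omega, show j + (d + 1) + 1 = j + d + 2 by omega]
    generalize dF T (j + 1) d = A at *
    generalize aF Ti (j + 1) d = B at *
    generalize T (j + d + 1) = t at *
    generalize Ti (j + d + 1) = t' at *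
    calc Y (j + d + 2) * D j = t' * Y (j + d + 1) * (t' * D j) := by
          rw [hs']; simp only [mul_assoc]
      _ = t' * (Y (j + d + 1) * D j) * t' := by rw [c']; simp only [mul_assoc]
      _ = (t' * D j) * Y (j + d + 1) * (A * T j ^ 2 * B) * t' := by
          rw [h0]; simp only [mul_assoc]
      _ = D j * (t' * Y (j + d + 1) * 1) * (A * T j ^ 2 * B) * t' := by
          rw [c']; simp only [mul_assoc, one_mul]
      _ = D j * (Y (j + d + 2) * t) * (A * T j ^ 2 * B) * t' := by
          rw [← i2, hs']; simp only [mul_assoc]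
      _ = _ := by simp only [mul_assoc]

/-- `x` intertwines ascending products. -/
lemma aF_intertwine {f : ℕ → M} {P : M} (s : ℕ) :
    ∀ l, (∀ k, s ≤ k → k < s + l → f k * P = P * f (k + 1)) →
      aF f s l * P = P * aF f (s + 1) l := by
  intro l
  induction l with
  | zero => intro _; simp [aF_zero]
  | succ l ih =>
    intro h
    rw [aF_succ_right, aF_succ_right, mul_assoc, h (s + l) (by omega) (by omega), ← mul_assoc,
      ih (fun k h1 h2 => h k h1 (by omega)), mul_assoc, show s + 1 + l = s + l + 1 by omega]

lemma aF_commute {f : ℕ → M} {x : M} (s : ℕ) :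
    ∀ l, (∀ k, s ≤ k → k < s + l → x * f k = f k * x) → x * aF f s l = aF f s l * x := by
  intro l
  induction l with
  | zero => intro _; simp [aF_zero]
  | succ l ih =>
    intro h
    rw [aF_succ_right, ← mul_assoc, ih (fun k h1 h2 => h k h1 (by omega)), mul_assoc,
      h (s + l) (by omega) (by omega), mul_assoc]

lemma BraidData.comm_i (H : BraidData n T Ti) {k l : ℕ} (hk : k + 1 < n) (hl : l + 1 < n)
    (h : k + 1 < l ∨ l + 1 < k) : T k * Ti l = Ti l * T k :=
  (inv_swap (H.inv2 l hl) (H.inv1 l hl) (H.comm hk hl h).symm).symm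

lemma BraidData.comm_ii (H : BraidData n T Ti) {k l : ℕ} (hk : k + 1 < n) (hl : l + 1 < n)
    (h : k + 1 < l ∨ l + 1 < k) : Ti k * Ti l = Ti l * Ti k :=
  inv_swap (H.inv2 k hk) (H.inv1 k hk) (H.comm_i hk hl h)

/-- `T_{k+1} T_k⁻¹ T_{k+1}⁻¹ = T_k⁻¹ T_{k+1}⁻¹ T_k`. -/
lemma BraidData.mixed1 (H : BraidData n T Ti) {k : ℕ} (hk : k + 2 < n) :
    T (k + 1) * (Ti k * Ti (k + 1)) = Ti k * Ti (k + 1) * T k := by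
  have b := H.braid k hk
  have a1 := H.inv1 k (by omega)
  have a2 := H.inv2 k (by omega)
  have c1 := H.inv1 (k + 1) (by omega)
  have c2 := H.inv2 (k + 1) (by omega)
  have e : T (k + 1) * T k * (Ti k * Ti (k + 1)) = 1 := by
    rw [mul_assoc, ← mul_assoc (T k), a1, one_mul, c1]
  have e' : Ti k * Ti (k + 1) * (T (k + 1) * T k) = 1 := by
    rw [mul_assoc, ← mul_assoc (Ti (k + 1)), c2, one_mul, a2]
  have := inv_swap (a := T (k + 1) * T k) (a' := Ti k * Ti (k + 1)) (b := T (k + 1) * T k)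
    (b' := Ti k * Ti (k + 1)) (x := 1) e' e (by simp)
  calc T (k + 1) * (Ti k * Ti (k + 1))
      = (Ti k * Ti (k + 1) * (T (k + 1) * T k)) * (T (k + 1) * (Ti k * Ti (k + 1))) := by
        rw [e', one_mul]
    _ = Ti k * Ti (k + 1) * (T (k + 1) * T k * T (k + 1)) * (Ti k * Ti (k + 1)) := by
        simp only [mul_assoc]
    _ = Ti k * Ti (k + 1) * T k * (T (k + 1) * T k * (Ti k * Ti (k + 1))) := by
        rw [← b]; simp only [mul_assoc]
    _ = _ := by rw [e, mul_one]

/-- `T_k T_{k+1}⁻¹ T_k⁻¹ = T_{k+1}⁻¹ T_k⁻¹ T_{k+1}`. -/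
lemma BraidData.mixed2 (H : BraidData n T Ti) {k : ℕ} (hk : k + 2 < n) :
    T k * (Ti (k + 1) * Ti k) = Ti (k + 1) * Ti k * T (k + 1) := by
  have b := H.braid k hk
  have a1 := H.inv1 k (by omega)
  have a2 := H.inv2 k (by omega)
  have c1 := H.inv1 (k + 1) (by omega)
  have c2 := H.inv2 (k + 1) (by omega)
  have e : T k * T (k + 1) * (Ti (k + 1) * Ti k) = 1 := by
    rw [mul_assoc, ← mul_assoc (T (k + 1)), c1, one_mul, a1]
  have e' : Ti (k + 1) * Ti k * (T k * T (k + 1)) = 1 := by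
    rw [mul_assoc, ← mul_assoc (Ti k), a2, one_mul, c2]
  calc T k * (Ti (k + 1) * Ti k)
      = (Ti (k + 1) * Ti k * (T k * T (k + 1))) * (T k * (Ti (k + 1) * Ti k)) := by
        rw [e', one_mul]
    _ = Ti (k + 1) * Ti k * (T k * T (k + 1) * T k) * (Ti (k + 1) * Ti k) := by
        simp only [mul_assoc]
    _ = Ti (k + 1) * Ti k * T (k + 1) * (T k * T (k + 1) * (Ti (k + 1) * Ti k)) := by
        rw [b]; simp only [mul_assoc]
    _ = _ := by rw [e, mul_one]

lemma shift_braid (H : BraidData n T Ti) :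
    ∀ m, m + 1 < n → T 0 * (aF Ti 1 m * aF Ti 0 m) = aF Ti 1 m * aF Ti 0 m * T m := by
  intro m
  induction m with
  | zero => intro _; simp [aF_zero]
  | succ m ih =>
    intro h
    have h0 := ih (by omega)
    have hx := H.mixed2 (k := m) (by omega)
    have hc : Ti (m + 1) * aF Ti 0 m = aF Ti 0 m * Ti (m + 1) :=
      aF_commute 0 m (fun k _ hk => H.comm_ii (by omega) (by omega) (by omega))
    have key : aF Ti 1 (m + 1) * aF Ti 0 (m + 1)
        = aF Ti 1 m * aF Ti 0 m * (Ti (m + 1) * Ti m) := by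
      rw [aF_succ_right, aF_succ_right, show 1 + m = m + 1 by omega, zero_add, mul_assoc,
        ← mul_assoc (Ti (m + 1)), hc]
      simp only [mul_assoc]
    rw [key, ← mul_assoc, h0, mul_assoc, hx]
    simp only [mul_assoc]

/-- The last `Y` commutes with early `T`'s. -/
lemma Y_last_comm (H : BraidData n T Ti) {P : M}
    (hP : ∀ k, k + 2 < n → T k * P = P * T (k + 1)) (k : ℕ) (hk : k + 2 < n) :
    T k * (P * aF Ti 0 (n - 1)) = P * aF Ti 0 (n - 1) * T k := by
  have main : ∀ l, k + 2 + l < n →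
      T (k + 1) * aF Ti 0 (k + 2 + l) = aF Ti 0 (k + 2 + l) * T k := by
    intro l
    induction l with
    | zero =>
      intro _
      have hc : T (k + 1) * aF Ti 0 k = aF Ti 0 k * T (k + 1) :=
        aF_commute 0 k (fun m _ hm => H.comm_i (by omega) (by omega) (by omega))
      have hm := H.mixed1 hk
      rw [add_zero, aF_succ_right, aF_succ_right, zero_add, zero_add]
      calc _ = (T (k + 1) * aF Ti 0 k) * (Ti k * Ti (k + 1)) := by simp only [mul_assoc]
        _ = aF Ti 0 k * (T (k + 1) * (Ti k * Ti (k + 1))) := by rw [hc]; simp only [mul_assoc]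
        _ = _ := by rw [hm]; simp only [mul_assoc]
    | succ l ih =>
      intro h
      have h0 := ih (by omega)
      have hc := H.comm_i (k := k) (l := k + 2 + l) (by omega) (by omega) (by omega)
      rw [← add_assoc, aF_succ_right, zero_add, ← mul_assoc, h0, mul_assoc, hc, mul_assoc]
  have h1 := main (n - 1 - (k + 2)) (by omega)
  rw [show k + 2 + (n - 1 - (k + 2)) = n - 1 by omega] at h1
  rw [← mul_assoc, hP k hk, mul_assoc, h1, mul_assoc]

lemma Y_fam (H : BraidData n T Ti) {P : M} {Y : ℕ → M}
    (hP : ∀ k, k + 2 < n → T k * P = P * T (k + 1))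
    (hY : ∀ i, Y i = aF T i (n - 1 - i) * P * aF Ti 0 i) : Fam n T Y where
  step := by
    intro j hj
    rw [hY j, hY (j + 1), show n - 1 - j = (n - 1 - (j + 1)) + 1 by omega, aF_succ, aF_succ_right,
      zero_add]
    simp only [mul_assoc]
    rw [H.inv2 j hj, mul_one]
  last := by
    intro k hk
    rw [hY, Nat.sub_self, aF_zero, one_mul]
    exact Y_last_comm H hP k hk

/-- The conjugated family of an operator commuting with the early `T`'s. -/
lemma conj_fam {B : ℕ → M} {b : M}
    (hB : ∀ i, B i = aF T i (n - 1 - i) * b * dF T i (n - 1 - i))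
    (hb : ∀ k, k + 2 < n → T k * b = b * T k) : Fam n T B where
  step := by
    intro j hj
    rw [hB j, hB (j + 1), show n - 1 - j = (n - 1 - (j + 1)) + 1 by omega, aF_succ, dF_succ]
    simp only [mul_assoc]
  last := by
    intro k hk
    rw [hB, Nat.sub_self, aF_zero, dF_zero, one_mul, mul_one]
    exact hb k hk

/-- Commutation of the last two `Y`'s. -/
lemma Y_comm (H : BraidData n T Ti) {P y : M} (m : ℕ) (hm : m + 2 = n)
    (hP : ∀ k, k + 2 < n → T k * P = P * T (k + 1))
    (hP2 : T m * (P * P) = P * P * T 0)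
    (hy : y = P * aF Ti 0 (m + 1)) : y * (T m * y * T m) = T m * y * T m * y := by
  have hU : aF Ti 0 m * P = P * aF Ti 1 m :=
    aF_intertwine 0 m (fun k _ hk =>
      inv_swap (H.inv2 k (by omega)) (H.inv1 (k + 1) (by omega)) (hP k (by omega)))
  have hs := shift_braid H m (by omega)
  have yT : y * T m = P * aF Ti 0 m := by
    rw [hy, aF_succ_right, zero_add, mul_assoc, mul_assoc, H.inv2 m (by omega), mul_one]
  have yE : y = P * aF Ti 0 m * Ti m := by
    rw [hy, aF_succ_right, zero_add, mul_assoc]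
  have e1 : y * T m * (y * T m) = P * P * (aF Ti 1 m * aF Ti 0 m) := by
    rw [yT]
    calc _ = P * (aF Ti 0 m * P) * aF Ti 0 m := by simp only [mul_assoc]
      _ = _ := by rw [hU]; simp only [mul_assoc]
  have e2 : T m * (y * T m * (y * T m)) = y * T m * (y * T m) * T m := by
    rw [e1, ← mul_assoc, hP2, mul_assoc, hs]; simp only [mul_assoc]
  calc y * (T m * y * T m) = y * T m * (y * T m) * (T m * Ti m) := by
        rw [H.inv1 m (by omega), mul_one]; simp only [mul_assoc]
    _ = (y * T m * (y * T m) * T m) * Ti m := by simp only [mul_assoc]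
    _ = T m * (y * T m) * y * (T m * Ti m) := by rw [← e2]; simp only [mul_assoc]
    _ = _ := by rw [H.inv1 m (by omega), mul_one]; simp only [mul_assoc]

lemma aF_dF_inv (H : BraidData n T Ti) (s : ℕ) :
    ∀ l, s + l < n → aF Ti s l * dF T s l = 1 := by
  intro l
  induction l with
  | zero => intro _; simp [aF_zero, dF_zero]
  | succ l ih =>
    intro h
    rw [aF_succ_right, dF_succ_left, mul_assoc, ← mul_assoc (Ti (s + l)), H.inv2 _ (by omega),
      one_mul, ih (by omega)]

lemma dF_aF_inv (H : BraidData n T Ti) (s : ℕ) :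
    ∀ l, s + l < n → dF T s l * aF Ti s l = 1 := by
  intro l
  induction l generalizing s with
  | zero => intro _; simp [aF_zero, dF_zero]
  | succ l ih =>
    intro h
    rw [aF_succ, dF_succ, mul_assoc, ← mul_assoc (T s), H.inv1 _ (by omega),
      one_mul, ih (s + 1) (by omega)]

lemma dFi_aF_inv (H : BraidData n T Ti) (s : ℕ) :
    ∀ l, s + l < n → dF Ti s l * aF T s l = 1 := by
  intro l
  induction l generalizing s with
  | zero => intro _; simp [aF_zero, dF_zero]
  | succ l ih =>
    intro h
    rw [aF_succ, dF_succ, mul_assoc, ← mul_assoc (Ti s), H.inv2 _ (by omega),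
      one_mul, ih (s + 1) (by omega)]

lemma aF_append (f : ℕ → M) (s a b : ℕ) : aF f s (a + b) = aF f s a * aF f (s + a) b := by
  induction b with
  | zero => simp [aF_zero]
  | succ b ih => rw [← add_assoc, aF_succ_right, ih, aF_succ_right, mul_assoc, add_assoc]

/-- The full-twist-type expression of `B_0`. -/
lemma fam_zero {B : ℕ → M} (hB : Fam n T B) :
    ∀ l, l < n → B 0 = aF T 0 l * B l * dF T 0 l := by
  intro l
  induction l with
  | zero => intro _; simp [aF_zero, dF_zero]
  | succ l ih =>
    intro h
    rw [ih (by omega), hB.step l h, aF_succ_right, dF_succ_left, zero_add]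
    simp only [mul_assoc]

end Abstract
section AbstractFinal

variable {F : Type*} [Field F] {M : Type*} [Ring M] [Algebra F M]

theorem abstract_main {n : ℕ} (hn : 0 < n) {T Ti : ℕ → M} (H : BraidData n T Ti) (c q : F)
    {P E : M} {Y Yi D : ℕ → M}
    (hP : ∀ k, k + 2 < n → T k * P = P * T (k + 1))
    (hP2 : ∀ m, m + 2 = n → T m * (P * P) = P * P * T 0)
    (hE : ∀ k, k + 2 < n → T k * E = E * T k)
    (hPE : ∀ m, m + 2 = n → P * E = T m * E * T m * P)
    (hP0 : P * (aF T 0 (n - 1) * E * dF T 0 (n - 1)) = q⁻¹ • (E * P))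
    (hY : ∀ i, Y i = aF T i (n - 1 - i) * P * aF Ti 0 i)
    (hYinv : ∀ i, i < n → Y i * Yi i = 1 ∧ Yi i * Y i = 1)
    (hD : ∀ i, D i = aF T i (n - 1 - i)
        * (c • (E * (Y (n - 1) - Yi (n - 1)))) * dF T i (n - 1 - i)) :
    (∀ i j : ℕ, i < n → j < n → i ≠ j →
      Y i * D j = Rgen Ti T (T i ^ 2) j i * D j * Y i * Rgen T Ti (T j ^ 2) i j) ∧
    (∀ l : ℕ, l < n →
      Y l * dF T 0 l * aF T 0 l * D l
        = q⁻¹ • (D l * aF Ti l (n - 1 - l) * dF Ti l (n - 1 - l) * Y l)) := by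
  have hYf : Fam n T Y := Y_fam H hP hY
  obtain ⟨y1, y2⟩ := hYinv (n - 1) (by omega)
  have hYl : Y (n - 1) = P * aF Ti 0 (n - 1) := by
    rw [hY, Nat.sub_self, aF_zero, one_mul]
  have hDf : Fam n T D := by
    refine conj_fam hD ?_
    intro k hk
    have h1 := hE k hk
    have h2 := hYf.last k hk
    have h3 := inv_swap y2 y1 h2.symm
    rw [mul_smul_comm, smul_mul_assoc]
    congr 1
    rw [← mul_assoc, h1, mul_assoc, mul_assoc, mul_sub, sub_mul, h2, h3]
  have hDl : D (n - 1) = c • (E * (Y (n - 1) - Yi (n - 1))) := by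
    rw [hD, Nat.sub_self, aF_zero, dF_zero, one_mul, mul_one]
  have hadj := adjacent H hYf hDf (by
    intro m hm
    have e : n - 1 = m + 1 := by omega
    rw [e] at hDl hYl y1 y2
    have hcomm := Y_comm H m hm hP (hP2 m hm) hYl
    have hcomm' := inv_swap y2 y1 hcomm
    have hU : E * aF Ti 0 m = aF Ti 0 m * E :=
      aF_commute 0 m (fun k _ hk =>
        (inv_swap (H.inv2 k (by omega)) (H.inv1 k (by omega)) (hE k (by omega))).symm)
    have yT : Y (m + 1) * T m = P * aF Ti 0 m := by
      rw [hYl, aF_succ_right, zero_add, mul_assoc, mul_assoc, H.inv2 m (by omega), mul_one]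
    have base : Y (m + 1) * T m * E = T m * E * (T m * Y (m + 1) * T m) := by
      rw [mul_assoc (T m) (Y _), yT, mul_assoc, ← hU, ← mul_assoc, hPE m hm]
      simp only [mul_assoc]
    rw [hDl]
    simp only [mul_smul_comm, smul_mul_assoc]
    congr 1
    rw [← mul_assoc, base]
    simp only [mul_assoc] at hcomm hcomm' ⊢
    simp only [mul_sub, sub_mul, mul_assoc]
    rw [hcomm, hcomm'])
  have hadj' : ∀ i, i + 1 < n →
      Y (i + 1) * T i * D (i + 1) = T i * D (i + 1) * T i * Y (i + 1) * T i :=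
    fun i hi => hadj (n - 2 - i) i (by omega)
  refine ⟨?_, ?_⟩
  · intro i j hi hj hij
    rcases Nat.lt_or_gt_of_ne hij with h | h
    · have := part_lt H hYf hDf hadj' i (j - i - 1) (by omega)
      rw [show i + (j - i - 1) + 1 = j by omega] at this
      rw [this, Rgen, if_pos h, Rgen, if_neg (by omega), mul_one]
    · have := part_gt H hYf hDf hadj' j (i - j - 1) (by omega)
      rw [show j + (i - j - 1) + 1 = i by omega] at this
      rw [this, Rgen, if_neg (by omega), Rgen, if_pos h, one_mul]
  · have hlast : P * (aF T 0 (n - 1) * D (n - 1)) = q⁻¹ • (D (n - 1) * Y (n - 1)) := by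
      have h1 : P * (aF T 0 (n - 1) * E) = q⁻¹ • (E * Y (n - 1)) := by
        calc P * (aF T 0 (n - 1) * E)
            = P * (aF T 0 (n - 1) * E * dF T 0 (n - 1)) * aF Ti 0 (n - 1) := by
              simp only [mul_assoc]
              rw [dF_aF_inv H 0 (n - 1) (by omega), mul_one]
          _ = _ := by rw [hP0, hYl, smul_mul_assoc, mul_assoc]
      rw [hDl]
      simp only [mul_smul_comm, smul_mul_assoc]
      rw [smul_comm]
      congr 1
      rw [← mul_assoc (aF T 0 (n - 1)), ← mul_assoc P, h1, smul_mul_assoc, mul_assoc, mul_assoc,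
        mul_sub, sub_mul, y1, y2]
    intro l hl
    have hDl' : D l = aF T l (n - 1 - l) * D (n - 1) * dF T l (n - 1 - l) := by
      rw [hD l, hDl]
    have a1 := aF_dF_inv H 0 l (by omega)
    have a2 := dF_aF_inv H l (n - 1 - l) (by omega)
    have a2' := aF_dF_inv H l (n - 1 - l) (by omega)
    have a3 := dFi_aF_inv H l (n - 1 - l) (by omega)
    have ap := aF_append T 0 l (n - 1 - l)
    have ap' := aF_append Ti 0 l (n - 1 - l)
    rw [zero_add, show l + (n - 1 - l) = n - 1 by omega] at ap ap'
    rw [hDl', hY l]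
    calc aF T l (n - 1 - l) * P * aF Ti 0 l * dF T 0 l * aF T 0 l *
          (aF T l (n - 1 - l) * D (n - 1) * dF T l (n - 1 - l))
        = aF T l (n - 1 - l) * P * (aF Ti 0 l * dF T 0 l) * (aF T 0 l *
          aF T l (n - 1 - l)) * D (n - 1) * dF T l (n - 1 - l) := by simp only [mul_assoc]
      _ = aF T l (n - 1 - l) * (P * (aF T 0 (n - 1) * D (n - 1))) * dF T l (n - 1 - l) := by
          rw [a1, ← ap, mul_one]; simp only [mul_assoc]
      _ = q⁻¹ • (aF T l (n - 1 - l) * (D (n - 1) * (P * aF Ti 0 l *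
            (aF Ti l (n - 1 - l) * dF T l (n - 1 - l))))) := by
          rw [hlast, hYl, ap', mul_smul_comm, smul_mul_assoc]; simp only [mul_assoc]
      _ = q⁻¹ • (aF T l (n - 1 - l) * D (n - 1) * (dF T l (n - 1 - l) * aF Ti l (n - 1 - l))
            * (dF Ti l (n - 1 - l) * aF T l (n - 1 - l)) * (P * aF Ti 0 l)) := by
          rw [a2, a2', a3]; simp only [mul_assoc, mul_one]
      _ = _ := by simp only [mul_assoc]

end AbstractFinal
lemma braid_core {A : Type*} [CommRing A] [NoZeroDivisors A] (x y z a b : A)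
    (p p1 p2 p12 p21 p121 u us1 us2 us12 v vs1 r u' us1' us2' us21' v' vs2' r' : A)
    (hyx : y - x ≠ 0) (hzx : z - x ≠ 0) (hzy : z - y ≠ 0)
    (e1 : (y - x) * u = (b * y - a * x) * p1 + (a - b) * (y * p))
    (e2 : (x - y) * us1 = (b * x - a * y) * p + (a - b) * (x * p1))
    (e3 : (z - x) * us2 = (b * z - a * x) * p21 + (a - b) * (z * p2))
    (e4 : (z - y) * us12 = (b * z - a * y) * p121 + (a - b) * (z * p12))
    (e5 : (z - y) * v = (b * z - a * y) * us2 + (a - b) * (z * u))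
    (e6 : (z - x) * vs1 = (b * z - a * x) * us12 + (a - b) * (z * us1))
    (e7 : (y - x) * r = (b * y - a * x) * vs1 + (a - b) * (y * v))
    (f1 : (z - y) * u' = (b * z - a * y) * p2 + (a - b) * (z * p))
    (f2 : (y - z) * us2' = (b * y - a * z) * p + (a - b) * (y * p2))
    (f3 : (z - x) * us1' = (b * z - a * x) * p12 + (a - b) * (z * p1))
    (f4 : (y - x) * us21' = (b * y - a * x) * p121 + (a - b) * (y * p21))
    (f5 : (y - x) * v' = (b * y - a * x) * us1' + (a - b) * (y * u'))
    (f6 : (z - x) * vs2' = (b * z - a * x) * us21' + (a - b) * (z * us2'))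
    (f7 : (z - y) * r' = (b * z - a * y) * vs2' + (a - b) * (z * v')) : r = r' := by
  have g : ((y - x) * (z - x) * (z - y)) * ((y - x) * (z - x) * (z - y)) * (r - r') = 0 := by
    linear_combination
      ((y - x) * (z - x) * (z - y)) * (z - x) * (z - y) * e7
      + ((y - x) * (z - x) * (z - y)) * (z - y) * (b * y - a * x) * e6
      + ((y - x) * (z - x) * (z - y)) * (z - x) * ((a - b) * y) * e5
      + (y - x) * (z - x) * (z - y) * (b * y - a * x) * (b * z - a * x) * e4
      - (z - x) * (z - y) * (z - y) * (b * y - a * x) * ((a - b) * z) * e2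
      + (y - x) * (z - x) * (z - y) * ((a - b) * y) * (b * z - a * y) * e3
      + (z - x) * (z - x) * (z - y) * ((a - b) * y) * ((a - b) * z) * e1
      - ((y - x) * (z - x) * (z - y)) * (z - x) * (y - x) * f7
      - ((y - x) * (z - x) * (z - y)) * (y - x) * (b * z - a * y) * f6
      - ((y - x) * (z - x) * (z - y)) * (z - x) * ((a - b) * z) * f5
      - (y - x) * (z - x) * (z - y) * (b * z - a * y) * (b * z - a * x) * f4
      + (z - x) * (y - x) * (y - x) * (b * z - a * y) * ((a - b) * z) * f2
      - (y - x) * (z - x) * (z - y) * ((a - b) * z) * (b * y - a * x) * f3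
      - (z - x) * (z - x) * (y - x) * ((a - b) * z) * ((a - b) * y) * f1
  have hK : (y - x) * (z - x) * (z - y) ≠ 0 := mul_ne_zero (mul_ne_zero hyx hzx) hzy
  exact sub_eq_zero.mp ((mul_eq_zero.mp g).resolve_left (mul_ne_zero hK hK))

section Concrete

lemma mono_mul {F : Type*} [Field F] {n : ℕ} (a b : Fin n →₀ ℤ) (c d : F) :
    mono a c * mono b d = mono (a + b) (c * d) := AddMonoidAlgebra.single_mul_single _ _ _ _

lemma mono_induction {F : Type*} [Field F] {n : ℕ} {motive : Laur F n → Prop} (x : Laur F n)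
    (h0 : motive 0) (hadd : ∀ x y, motive x → motive y → motive (x + y))
    (hm : ∀ a c, motive (mono a c)) : motive x :=
  AddMonoidAlgebra.induction_linear x h0 hadd hm

lemma end_ext {F : Type*} [Field F] {n : ℕ} {f g : Module.End F (Laur F n)}
    (h : ∀ a c, f (mono a c) = g (mono a c)) (p : Laur F n) : f p = g p := by
  refine mono_induction (motive := fun p => f p = g p) p (by simp) ?_ h
  intro x y hx hy
  rw [map_add, map_add, hx, hy]

lemma end_mul {F : Type*} [Field F] {n : ℕ} {f : Module.End F (Laur F n)}
    (h : ∀ a c b d, f (mono a c * mono b d) = f (mono a c) * f (mono b d)) (p r : Laur F n) :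
    f (p * r) = f p * f r := by
  refine mono_induction (motive := fun p => f (p * r) = f p * f r) p (by simp) ?_ ?_
  · intro x y hx hy
    rw [add_mul, map_add, map_add, hx, hy, add_mul]
  · intro a c
    refine mono_induction (motive := fun r => f (mono a c * r) = f (mono a c) * f r) r
      (by simp) ?_ ?_
    · intro x y hx hy
      rw [mul_add, map_add, map_add, hx, hy, mul_add]
    · intro b d
      exact h a c b d

lemma Xel_sub_ne {F : Type*} [Field F] {n : ℕ} {i j : Fin n} (h : i ≠ j) :
    (Xel i - Xel j : Laur F n) ≠ 0 := by
  intro e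
  have e' : (Xel i : Laur F n) = Xel j := sub_eq_zero.mp e
  have := congrArg (fun p : Laur F n => p.coeff (Finsupp.single i 1)) e'
  simp [Xel, mono, Finsupp.single_eq_single_iff, h.symm] at this

lemma XinvEl_mul {F : Type*} [Field F] {n : ℕ} (i : Fin n) :
    (XinvEl i * Xel i : Laur F n) = 1 := by
  rw [XinvEl, Xel, mono_mul, ← Finsupp.single_add]
  simp [mono, AddMonoidAlgebra.one_def]
/-- The hypotheses of the theorem on `W`, `T`, `Ti`. -/
structure HeckeData (F : Type*) [Field F] (n : ℕ) (τ : F)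
    (W : Equiv.Perm (Fin n) → Module.End F (Laur F n))
    (T Ti : ℕ → Module.End F (Laur F n)) : Prop where
  hW : ∀ (w : Equiv.Perm (Fin n)) (a : Fin n →₀ ℤ) (c : F),
      W w (mono a c) = mono (Finsupp.equivMapDomain w a) c
  hT : ∀ (k : ℕ) (hk : k + 1 < n) (p : Laur F n),
      (Xel ⟨k + 1, hk⟩ - Xel ⟨k, Nat.lt_of_succ_lt hk⟩) * T k p
        = (τ⁻¹ • Xel ⟨k + 1, hk⟩ - τ • Xel ⟨k, Nat.lt_of_succ_lt hk⟩)
            * W (Equiv.swap ⟨k, Nat.lt_of_succ_lt hk⟩ ⟨k + 1, hk⟩) p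
          + (τ - τ⁻¹) • (Xel ⟨k + 1, hk⟩ * p)
  hTi : ∀ k, Ti k = T k + (τ⁻¹ - τ) • (1 : Module.End F (Laur F n))
  hTinv : ∀ k, k + 1 < n → T k * Ti k = 1 ∧ Ti k * T k = 1

variable {F : Type*} [Field F] {n : ℕ} {τ : F}
    {W : Equiv.Perm (Fin n) → Module.End F (Laur F n)}
    {T Ti : ℕ → Module.End F (Laur F n)}

namespace HeckeData

lemma W_mul (H : HeckeData F n τ W T Ti) (w : Equiv.Perm (Fin n)) (p r : Laur F n) :
    W w (p * r) = W w p * W w r := by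
  refine end_mul ?_ p r
  intro a c b d
  rw [mono_mul, H.hW, H.hW, H.hW, mono_mul]
  congr 1
  ext x
  simp

lemma W_X (H : HeckeData F n τ W T Ti) (w : Equiv.Perm (Fin n)) (i : Fin n) :
    W w (Xel i) = Xel (w i) := by
  rw [Xel, H.hW, Finsupp.equivMapDomain_single, Xel]

lemma W_Xi (H : HeckeData F n τ W T Ti) (w : Equiv.Perm (Fin n)) (i : Fin n) :
    W w (XinvEl i) = XinvEl (w i) := by
  rw [XinvEl, H.hW, Finsupp.equivMapDomain_single, XinvEl]

lemma W_comp (H : HeckeData F n τ W T Ti) (w w' : Equiv.Perm (Fin n)) (p : Laur F n) :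
    W w (W w' p) = W (w * w') p := by
  refine end_ext (f := W w * W w') ?_ p
  intro a c
  rw [Module.End.mul_apply, H.hW, H.hW, H.hW]
  congr 1
  ext x
  rfl

lemma W_one (H : HeckeData F n τ W T Ti) (p : Laur F n) : W 1 p = p := by
  refine end_ext (g := 1) ?_ p
  intro a c
  rw [H.hW]
  change _ = mono a c
  congr 1
  ext x
  rfl

/-- The defining equation of `T_k`, transported by `W w`. -/
lemma WT (H : HeckeData F n τ W T Ti) (k : ℕ) (hk : k + 1 < n) (w : Equiv.Perm (Fin n))
    (p : Laur F n) :
    (Xel (w ⟨k + 1, hk⟩) - Xel (w ⟨k, Nat.lt_of_succ_lt hk⟩)) * W w (T k p)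
      = (algebraMap F _ τ⁻¹ * Xel (w ⟨k + 1, hk⟩)
            - algebraMap F _ τ * Xel (w ⟨k, Nat.lt_of_succ_lt hk⟩))
          * W (w * Equiv.swap ⟨k, Nat.lt_of_succ_lt hk⟩ ⟨k + 1, hk⟩) p
        + (algebraMap F _ τ - algebraMap F _ τ⁻¹) * (Xel (w ⟨k + 1, hk⟩) * W w p) := by
  have h := congrArg (W w) (H.hT k hk p)
  rw [map_add, H.W_mul, H.W_mul, map_sub, map_sub, map_smul, map_smul, map_smul, H.W_mul,
    H.W_X, H.W_X, H.W_comp] at h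
  rw [h, ← map_sub]
  simp only [Algebra.smul_def]

lemma WT1 (H : HeckeData F n τ W T Ti) (k : ℕ) (hk : k + 1 < n) (p : Laur F n) :
    (Xel ⟨k + 1, hk⟩ - Xel ⟨k, Nat.lt_of_succ_lt hk⟩) * T k p
      = (algebraMap F _ τ⁻¹ * Xel ⟨k + 1, hk⟩
            - algebraMap F _ τ * Xel ⟨k, Nat.lt_of_succ_lt hk⟩)
          * W (Equiv.swap ⟨k, Nat.lt_of_succ_lt hk⟩ ⟨k + 1, hk⟩) p
        + (algebraMap F _ τ - algebraMap F _ τ⁻¹) * (Xel ⟨k + 1, hk⟩ * p) := by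
  rw [H.hT k hk p, ← map_sub]
  simp only [Algebra.smul_def]

lemma dne {k : ℕ} (hk : k + 1 < n) :
    (Xel ⟨k + 1, hk⟩ - Xel ⟨k, Nat.lt_of_succ_lt hk⟩ : Laur F n) ≠ 0 :=
  Xel_sub_ne (by simp [Fin.ext_iff])

/-- A multiplicative operator intertwines `T_i` and `T_j`. -/
lemma intertwine (H : HeckeData F n τ W T Ti) {i j : ℕ} (hi : i + 1 < n) (hj : j + 1 < n)
    (φ : Module.End F (Laur F n)) (c : F) (hc : c ≠ 0)
    (hφ : ∀ p r, φ (p * r) = φ p * φ r)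
    (h1 : φ (Xel ⟨i + 1, hi⟩) = c • Xel ⟨j + 1, hj⟩)
    (h0 : φ (Xel ⟨i, Nat.lt_of_succ_lt hi⟩) = c • Xel ⟨j, Nat.lt_of_succ_lt hj⟩)
    (hs : ∀ p, φ (W (Equiv.swap ⟨i, Nat.lt_of_succ_lt hi⟩ ⟨i + 1, hi⟩) p)
      = W (Equiv.swap ⟨j, Nat.lt_of_succ_lt hj⟩ ⟨j + 1, hj⟩) (φ p)) :
    T j * φ = φ * T i := by
  refine LinearMap.ext fun p => ?_
  rw [Module.End.mul_apply, Module.End.mul_apply]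
  have h := congrArg φ (H.hT i hi p)
  have h' := H.hT j hj (φ p)
  rw [map_add, hφ, hφ, map_sub, map_sub, map_smul, map_smul, map_smul, hφ, h1, h0, hs] at h
  refine mul_left_cancel₀ (dne (F := F) hj) ?_
  rw [h']
  have hc' : Function.Injective (fun x : Laur F n => c • x) := by
    intro x y hxy
    have := congrArg (fun z => c⁻¹ • z) hxy
    simpa [smul_smul, hc] using this
  apply hc'
  simp only [Algebra.smul_def] at h ⊢
  linear_combination -h

/-- `T_k` is linear over `s_k`-invariants. -/
lemma T_inv (H : HeckeData F n τ W T Ti) {k : ℕ} (hk : k + 1 < n) (r p : Laur F n)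
    (hr : W (Equiv.swap ⟨k, Nat.lt_of_succ_lt hk⟩ ⟨k + 1, hk⟩) r = r) :
    T k (r * p) = r * T k p := by
  refine mul_left_cancel₀ (dne (F := F) hk) ?_
  have h1 := H.WT1 k hk (r * p)
  have h2 := H.WT1 k hk p
  rw [H.W_mul, hr] at h1
  linear_combination h1 - r * h2

lemma far' (H : HeckeData F n τ W T Ti) (k l : ℕ) (h : k + 1 < l) (hl : l + 1 < n) :
    T k * T l = T l * T k := by
  have hk : k + 1 < n := by omega
  have hcomm : T k * W (Equiv.swap ⟨l, Nat.lt_of_succ_lt hl⟩ ⟨l + 1, hl⟩)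
      = W (Equiv.swap ⟨l, Nat.lt_of_succ_lt hl⟩ ⟨l + 1, hl⟩) * T k := by
    refine H.intertwine hk hk _ 1 one_ne_zero (H.W_mul _) ?_ ?_ ?_
    · rw [H.W_X, one_smul, Equiv.swap_apply_of_ne_of_ne] <;> simp [Fin.ext_iff] <;> omega
    · rw [H.W_X, one_smul, Equiv.swap_apply_of_ne_of_ne] <;> simp [Fin.ext_iff] <;> omega
    · intro p
      rw [H.W_comp, H.W_comp]
      congr 2
      refine Equiv.Perm.Disjoint.commute ?_
      intro x
      by_cases hx : x.val = l ∨ x.val = l + 1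
      · right
        rw [Equiv.swap_apply_of_ne_of_ne] <;> simp [Fin.ext_iff] <;> omega
      · left
        rw [Equiv.swap_apply_of_ne_of_ne] <;> simp [Fin.ext_iff] <;> omega
  have fx : ∀ m (hm : m < n), m ≠ k → m ≠ k + 1 →
      W (Equiv.swap ⟨k, Nat.lt_of_succ_lt hk⟩ ⟨k + 1, hk⟩) (Xel ⟨m, hm⟩) = Xel ⟨m, hm⟩ := by
    intro m hm h1 h2
    rw [H.W_X, Equiv.swap_apply_of_ne_of_ne] <;> simp [Fin.ext_iff] <;> omega
  refine LinearMap.ext fun p => ?_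
  rw [Module.End.mul_apply, Module.End.mul_apply]
  refine mul_left_cancel₀ (dne (F := F) hl) ?_
  have x0 := fx l (by omega) (by omega) (by omega)
  have x1 := fx (l + 1) (by omega) (by omega) (by omega)
  rw [← H.T_inv hk _ _ (by rw [map_sub, x0, x1]), H.hT l hl, H.hT l hl, map_add, map_smul,
    H.T_inv hk _ _ (by rw [map_sub, map_smul, map_smul, x0, x1]), H.T_inv hk _ _ x1]
  have := LinearMap.congr_fun hcomm p
  rw [Module.End.mul_apply, Module.End.mul_apply] at this
  rw [this]

lemma braid' (H : HeckeData F n τ W T Ti) (k : ℕ) (hk : k + 2 < n) :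
    T k * T (k + 1) * T k = T (k + 1) * T k * T (k + 1) := by
  refine LinearMap.ext fun p => ?_
  simp only [Module.End.mul_apply]
  have A := H.WT k (by omega)
  have B := H.WT (k + 1) (by omega)
  have d1 : (Xel ⟨k + 1, by omega⟩ - Xel ⟨k, by omega⟩ : Laur F n) ≠ 0 :=
    Xel_sub_ne (by simp [Fin.ext_iff])
  have d2 : (Xel ⟨k + 2, by omega⟩ - Xel ⟨k, by omega⟩ : Laur F n) ≠ 0 :=
    Xel_sub_ne (by simp [Fin.ext_iff])
  have d3 : (Xel ⟨k + 2, by omega⟩ - Xel ⟨k + 1, by omega⟩ : Laur F n) ≠ 0 :=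
    Xel_sub_ne (by simp [Fin.ext_iff])
  have n01 : (⟨k, by omega⟩ : Fin n) ≠ ⟨k + 1, by omega⟩ := by simp [Fin.ext_iff]
  have n02 : (⟨k, by omega⟩ : Fin n) ≠ ⟨k + 2, by omega⟩ := by simp [Fin.ext_iff]
  have n12 : (⟨k + 1, by omega⟩ : Fin n) ≠ ⟨k + 2, by omega⟩ := by simp [Fin.ext_iff]
  simp only [show k + 1 + 1 = k + 2 from rfl] at B
  generalize (⟨k, _⟩ : Fin n) = i0 at *
  generalize (⟨k + 1, _⟩ : Fin n) = i1 at *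
  generalize (⟨k + 2, _⟩ : Fin n) = i2 at *
  have hs : Equiv.swap i0 i1 * Equiv.swap i1 i2 * Equiv.swap i0 i1
      = Equiv.swap i1 i2 * Equiv.swap i0 i1 * Equiv.swap i1 i2 := by
    rw [Equiv.swap_mul_swap_mul_swap n01 n02, Equiv.swap_comm i0 i1, Equiv.swap_comm i1 i2,
      Equiv.swap_mul_swap_mul_swap n12.symm n02.symm, Equiv.swap_comm]
  have c1 : ∀ w : Equiv.Perm (Fin n), w = 1 * w := fun w => (one_mul w).symm
  generalize hs1 : Equiv.swap i0 i1 = s1 at *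
  generalize hs2 : Equiv.swap i1 i2 = s2 at *
  have s10 : s1 i0 = i1 := by rw [← hs1, Equiv.swap_apply_left]
  have s11 : s1 i1 = i0 := by rw [← hs1, Equiv.swap_apply_right]
  have s12 : s1 i2 = i2 := by rw [← hs1, Equiv.swap_apply_of_ne_of_ne n02.symm n12.symm]
  have s20 : s2 i0 = i0 := by rw [← hs2, Equiv.swap_apply_of_ne_of_ne n01 n02]
  have s21 : s2 i1 = i2 := by rw [← hs2, Equiv.swap_apply_left]
  have s22 : s2 i2 = i1 := by rw [← hs2, Equiv.swap_apply_right]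
  have ss1 : s1 * s1 = 1 := by rw [← hs1, Equiv.swap_mul_self]
  have ss2 : s2 * s2 = 1 := by rw [← hs2, Equiv.swap_mul_self]
  have e1 := A 1 p
  have e2 := A s1 p
  have e3 := A s2 p
  have e4 := A (s1 * s2) p
  have e5 := B 1 (T k p)
  have e6 := B s1 (T k p)
  have e7 := A 1 (T (k + 1) (T k p))
  have f1 := B 1 p
  have f2 := B s2 p
  have f3 := B s1 p
  have f4 := B (s2 * s1) p
  have f5 := A 1 (T (k + 1) p)
  have f6 := A s2 (T (k + 1) p)
  have f7 := B 1 (T k (T (k + 1) p))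
  simp only [Equiv.Perm.mul_apply, Equiv.Perm.one_apply, one_mul, H.W_one, s10, s11, s12, s20, s21,
    s22, ss1, ss2] at e1 e2 e3 e4 e5 e6 e7 f1 f2 f3 f4 f5 f6 f7
  rw [hs] at e4
  exact braid_core _ _ _ _ _ _ _ _ _ _ _ _ _ _ _ _ _ _ _ _ _ _ _ _ _ d1 d2 d3
    e1 e2 e3 e4 e5 e6 e7 f1 f2 f3 f4 f5 f6 f7

lemma braidData (H : HeckeData F n τ W T Ti) : BraidData n T Ti where
  inv1 := fun k hk => (H.hTinv k hk).1
  inv2 := fun k hk => (H.hTinv k hk).2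
  far := H.far'
  braid := H.braid'

lemma TXiT (H : HeckeData F n τ W T Ti) (k : ℕ) (hk : k + 1 < n) :
    (XinvOp k : Module.End F (Laur F n)) = T k * XinvOp (k + 1) * T k := by
  have key : ∀ u : Laur F n, T k (XinvEl ⟨k + 1, hk⟩ * u)
      = XinvEl ⟨k, Nat.lt_of_succ_lt hk⟩ * Ti k u := by
    intro u
    have h1 := H.WT1 k hk (XinvEl ⟨k + 1, hk⟩ * u)
    have h2 := H.WT1 k hk u
    have x0 := XinvEl_mul (F := F) (⟨k, Nat.lt_of_succ_lt hk⟩ : Fin n)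
    have x1 := XinvEl_mul (F := F) (⟨k + 1, hk⟩ : Fin n)
    rw [H.W_mul, H.W_Xi, Equiv.swap_apply_right] at h1
    have h3 : Ti k u = T k u + (algebraMap F _ τ⁻¹ - algebraMap F _ τ) * u := by
      rw [H.hTi k, LinearMap.add_apply, LinearMap.smul_apply, Module.End.one_apply, ← map_sub,
        Algebra.smul_def]
    rw [h3]
    refine mul_left_cancel₀ (dne (F := F) hk) ?_
    generalize (algebraMap F (Laur F n)) τ = a at *
    generalize (algebraMap F (Laur F n)) τ⁻¹ = b at *
    generalize (Xel ⟨k + 1, hk⟩ : Laur F n) = y at *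
    generalize (Xel ⟨k, Nat.lt_of_succ_lt hk⟩ : Laur F n) = x at *
    generalize (XinvEl ⟨k + 1, hk⟩ : Laur F n) = y' at *
    generalize (XinvEl ⟨k, Nat.lt_of_succ_lt hk⟩ : Laur F n) = x' at *
    linear_combination h1 - x' * h2 + (a - b) * u * x1 - (a - b) * u * x0
  refine LinearMap.ext fun p => ?_
  rw [Module.End.mul_apply, Module.End.mul_apply, XinvOp, XinvOp, dif_pos hk,
    dif_pos (Nat.lt_of_succ_lt hk)]
  change _ * p = T k (_ * _)
  rw [key, ← Module.End.mul_apply, (H.hTinv k hk).2, Module.End.one_apply]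

lemma XinvFam (H : HeckeData F n τ W T Ti) : Fam n T (XinvOp : ℕ → Module.End F (Laur F n)) where
  step := H.TXiT
  last := by
    intro k hk
    refine LinearMap.ext fun p => ?_
    rw [Module.End.mul_apply, Module.End.mul_apply, XinvOp, dif_pos (by omega)]
    refine H.T_inv (by omega) _ p ?_
    rw [H.W_Xi, Equiv.swap_apply_of_ne_of_ne] <;> simp [Fin.ext_iff] <;> omega

end HeckeData

end Concrete
section PiInv

variable {F : Type*} [Field F] {n : ℕ} [NeZero n] {q : F} {P : Module.End F (Laur F n)}

lemma rot_symm_succ {k : ℕ} (hk : k + 1 < n) :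
    (finRotate n).symm ⟨k + 1, hk⟩ = ⟨k, Nat.lt_of_succ_lt hk⟩ := by
  rw [Equiv.symm_apply_eq]
  obtain ⟨m, rfl⟩ : ∃ m, n = m + 1 := ⟨n - 1, by omega⟩
  rw [finRotate_of_lt (by omega)]

lemma rot_symm_zero (h0 : 0 < n) :
    (finRotate n).symm ⟨0, h0⟩ = ⟨n - 1, by omega⟩ := by
  rw [Equiv.symm_apply_eq]
  obtain ⟨m, rfl⟩ : ∃ m, n = m + 1 := ⟨n - 1, by omega⟩
  exact finRotate_last'.symm

lemma P_mul (hq : q ≠ 0) (hP : ∀ (a : Fin n →₀ ℤ) (c : F),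
      P (mono a c) = q ^ (a 0) • mono (Finsupp.equivMapDomain (finRotate n).symm a) c)
    (p r : Laur F n) : P (p * r) = P p * P r := by
  refine end_mul ?_ p r
  intro a c b d
  rw [mono_mul, hP, hP, hP, smul_mul_smul_comm, mono_mul, Finsupp.add_apply, zpow_add₀ hq]
  congr 2
  ext x
  simp

lemma P_single_succ (hP : ∀ (a : Fin n →₀ ℤ) (c : F),
      P (mono a c) = q ^ (a 0) • mono (Finsupp.equivMapDomain (finRotate n).symm a) c)
    {k : ℕ} (hk : k + 1 < n) (z : ℤ) :
    P (mono (Finsupp.single ⟨k + 1, hk⟩ z) 1)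
      = mono (Finsupp.single ⟨k, Nat.lt_of_succ_lt hk⟩ z) 1 := by
  rw [hP, Finsupp.equivMapDomain_single, rot_symm_succ, Finsupp.single_apply, if_neg, zpow_zero,
    one_smul]
  simp [Fin.ext_iff]

lemma P_single_zero (hP : ∀ (a : Fin n →₀ ℤ) (c : F),
      P (mono a c) = q ^ (a 0) • mono (Finsupp.equivMapDomain (finRotate n).symm a) c)
    (h0 : 0 < n) (z : ℤ) :
    P (mono (Finsupp.single ⟨0, h0⟩ z) 1)
      = q ^ z • mono (Finsupp.single ⟨n - 1, by omega⟩ z) 1 := by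
  rw [hP, Finsupp.equivMapDomain_single, rot_symm_zero, Finsupp.single_apply, if_pos]
  simp [Fin.ext_iff]

end PiInv

theorem concrete_main
    (F : Type*) [Field F] (n : ℕ) [NeZero n]
    (q τ : F) (hq : q ≠ 0)
    (W : Equiv.Perm (Fin n) → Module.End F (Laur F n))
    (T Ti : ℕ → Module.End F (Laur F n))
    (H : HeckeData F n τ W T Ti)
    (P : Module.End F (Laur F n))
    (hP : ∀ (a : Fin n →₀ ℤ) (c : F),
      P (mono a c) = q ^ (a 0) • mono (Finsupp.equivMapDomain (finRotate n).symm a) c) :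
    (∀ k, k + 2 < n → T k * P = P * T (k + 1)) ∧
    (∀ m, m + 2 = n → T m * (P * P) = P * P * T 0) ∧
    (∀ m, m + 2 = n → P * XinvOp (n - 1) = T m * XinvOp (n - 1) * T m * P) ∧
    (P * (aF T 0 (n - 1) * XinvOp (n - 1) * dF T 0 (n - 1)) = q⁻¹ • (XinvOp (n - 1) * P)) := by
  have hn : 0 < n := Nat.pos_of_ne_zero (NeZero.ne n)
  refine ⟨?_, ?_, ?_, ?_⟩
  · intro k hk
    refine H.intertwine (by omega) (by omega) P 1 one_ne_zero (P_mul hq hP) ?_ ?_ ?_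
    · rw [one_smul]; exact P_single_succ hP (k := k + 1) hk 1
    · rw [one_smul]; exact P_single_succ hP (k := k) _ 1
    · intro p
      refine end_ext (f := P * W _) (g := W _ * P) ?_ p
      intro a c
      rw [Module.End.mul_apply, Module.End.mul_apply, H.hW, hP, hP, map_smul, H.hW]
      refine congrArg₂ (fun (x : F) (y : Laur F n) => x • y) ?_ (congrArg (fun b => mono b c) ?_)
      · rw [Finsupp.equivMapDomain_apply, Equiv.symm_swap, Equiv.swap_apply_of_ne_of_ne] <;>
          simp [Fin.ext_iff]
      · ext x
        simp only [Finsupp.equivMapDomain_apply, Equiv.symm_swap, Equiv.symm_symm]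
        congr 1
        have := Equiv.swap_apply_apply (finRotate n).symm (⟨k + 1, by omega⟩ : Fin n)
          ⟨k + 2, hk⟩
        rw [rot_symm_succ, rot_symm_succ (k := k + 1) hk] at this
        rw [this]
        simp [Equiv.Perm.mul_apply]
  · intro m hm
    have p0 : P (Xel ⟨0, hn⟩) = q • Xel ⟨m + 1, by omega⟩ := by
      have h := P_single_zero hP hn 1
      rw [zpow_one] at h
      rw [Xel, h, Xel]
      congr 4
      omega
    have p1 : P (Xel ⟨1, by omega⟩) = Xel ⟨0, hn⟩ := P_single_succ hP (k := 0) (by omega) 1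
    have pm : P (Xel ⟨m + 1, by omega⟩) = Xel ⟨m, by omega⟩ := P_single_succ hP (k := m) _ 1
    refine H.intertwine (i := 0) (j := m) (by omega) (by omega) (P * P) q hq ?_ ?_ ?_ ?_
    · intro p r
      simp only [Module.End.mul_apply, P_mul hq hP]
    · rw [Module.End.mul_apply]
      simp only [zero_add]
      rw [p1, p0]
    · rw [Module.End.mul_apply, p0, map_smul, pm]
    · intro p
      refine end_ext (f := P * P * W _) (g := W _ * (P * P)) ?_ p
      intro a c
      have r0 : finRotate n 0 = ⟨1, by omega⟩ := by
        rw [← Equiv.eq_symm_apply, rot_symm_succ (k := 0) (by omega)]; rfl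
      have z0 : (⟨0, hn⟩ : Fin n) = 0 := rfl
      simp only [Module.End.mul_apply, H.hW, hP, map_smul, smul_smul]
      refine congrArg₂ (fun (x : F) (y : Laur F n) => x • y) ?_ (congrArg (fun b => mono b c) ?_)
      · simp only [Finsupp.equivMapDomain_apply, Equiv.symm_swap, Equiv.symm_symm, r0, zero_add]
        rw [← z0, Equiv.swap_apply_left, Equiv.swap_apply_right, mul_comm]
      · ext x
        simp only [Finsupp.equivMapDomain_apply, Equiv.symm_swap, Equiv.symm_symm]
        congr 1
        have := Equiv.swap_apply_apply ((finRotate n).symm * (finRotate n).symm)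
          (⟨0, hn⟩ : Fin n) ⟨0 + 1, by omega⟩
        rw [Equiv.Perm.mul_apply, Equiv.Perm.mul_apply, rot_symm_succ, rot_symm_zero] at this
        have e : (⟨n - 1, by omega⟩ : Fin n) = ⟨m + 1, by omega⟩ := by
          rw [Fin.mk.injEq]; omega
        rw [e, rot_symm_succ] at this
        rw [this]
        simp [Equiv.Perm.mul_apply]
  · intro m hm
    have e : n - 1 = m + 1 := by omega
    rw [e, ← H.TXiT m (by omega)]
    refine LinearMap.ext fun p => ?_
    rw [Module.End.mul_apply, Module.End.mul_apply, XinvOp, XinvOp, dif_pos (by omega),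
      dif_pos (by omega)]
    change P (_ * p) = _ * P p
    rw [P_mul hq hP]
    congr 1
    exact P_single_succ hP _ _
  · rw [← fam_zero H.XinvFam (n - 1) (by omega)]
    refine LinearMap.ext fun p => ?_
    rw [Module.End.mul_apply, LinearMap.smul_apply, Module.End.mul_apply, XinvOp, XinvOp,
      dif_pos hn, dif_pos (by omega)]
    change P (_ * p) = q⁻¹ • (_ * P p)
    rw [P_mul hq hP, ← smul_mul_assoc]
    congr 1
    have h := P_single_zero hP hn (-1)
    rw [zpow_neg_one] at h
    exact h

/-- Relations between `Y_i` and `D_j` (indices `0`-based):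
`Y_i D_j = (ℛ⁻¹)⁺_{ji} D_j Y_i ℛ⁺_{ij}` for `i ≠ j`, and
`Y_l T⁻_{l-1,1} T⁺_{1,l-1} D_l = q⁻¹ D_l (T⁻¹)⁺_{l,n-1} (T⁻¹)⁻_{n-1,l} Y_l`. -/
theorem statement6
    (F : Type*) [Field F] (n : ℕ) [NeZero n]
    (q τ : F) (hq : q ≠ 0) (hqroot : ∀ m : ℕ, m ≠ 0 → q ^ m ≠ 1) (hτ : τ ≠ 0)
    -- the action of the symmetric group permuting the variables
    (W : Equiv.Perm (Fin n) → Module.End F (Laur F n))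
    (hW : ∀ (w : Equiv.Perm (Fin n)) (a : Fin n →₀ ℤ) (c : F),
      W w (mono a c) = mono (Finsupp.equivMapDomain w a) c)
    -- the Demazure–Lusztig operators `T_k` and their inverses `Ti k = T k + τ⁻¹ - τ`
    (T Ti : ℕ → Module.End F (Laur F n))
    (hT : ∀ (k : ℕ) (hk : k + 1 < n) (p : Laur F n),
      (Xel ⟨k + 1, hk⟩ - Xel ⟨k, Nat.lt_of_succ_lt hk⟩) * T k p
        = (τ⁻¹ • Xel ⟨k + 1, hk⟩ - τ • Xel ⟨k, Nat.lt_of_succ_lt hk⟩)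
            * W (Equiv.swap ⟨k, Nat.lt_of_succ_lt hk⟩ ⟨k + 1, hk⟩) p
          + (τ - τ⁻¹) • (Xel ⟨k + 1, hk⟩ * p))
    (hTi : ∀ k, Ti k = T k + (τ⁻¹ - τ) • (1 : Module.End F (Laur F n)))
    (hTinv : ∀ k, k + 1 < n → T k * Ti k = 1 ∧ Ti k * T k = 1)
    -- the operator `π⁻¹`
    (piInv : Module.End F (Laur F n))
    (hpiInv : ∀ (a : Fin n →₀ ℤ) (c : F),
      piInv (mono a c)
        = q ^ (a 0) • mono (Finsupp.equivMapDomain (finRotate n).symm a) c)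
    -- the operators `Y_i = T_i ⋯ T_{n-1} ⬝ π⁻¹ ⬝ T_1⁻¹ ⋯ T_{i-1}⁻¹` and their inverses
    (Y Yi : ℕ → Module.End F (Laur F n))
    (hY : ∀ i, Y i = aF T i (n - 1 - i) * piInv * aF Ti 0 i)
    (hYinv : ∀ i, i < n → Y i * Yi i = 1 ∧ Yi i * Y i = 1)
    -- the `q`-Dunkl-type operators `D_i`
    (D : ℕ → Module.End F (Laur F n))
    (hD : ∀ i, D i = aF T i (n - 1 - i)
        * ((q - q⁻¹)⁻¹ • (XinvOp (n - 1) * (Y (n - 1) - Yi (n - 1))))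
        * dF T i (n - 1 - i))
    :
    (∀ i j : ℕ, i < n → j < n → i ≠ j →
      Y i * D j = Rgen Ti T (T i ^ 2) j i * D j * Y i * Rgen T Ti (T j ^ 2) i j) ∧
    (∀ l : ℕ, l < n →
      Y l * dF T 0 l * aF T 0 l * D l
        = q⁻¹ • (D l * aF Ti l (n - 1 - l) * dF Ti l (n - 1 - l) * Y l)) := by
  have H : HeckeData F n τ W T Ti := ⟨hW, hT, hTi, hTinv⟩
  obtain ⟨h1, h2, h3, h4⟩ := concrete_main F n q τ hq W T Ti H piInv hpiInv
  exact abstract_main (Nat.pos_of_ne_zero (NeZero.ne n)) H.braidData (q - q⁻¹)⁻¹ q h1 h2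
    H.XinvFam.last h3 h4 hY hYinv hD
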